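/- Let G be a finite group acting faithfully and primitively on a finite set V, and suppose the stabiliser of each point of V is cyclic and nontrivial. Then there exist a finite field K, a bijection ι : V → K, and a subgroup S of the multiplicative group Kˣ such that, transporting the action of G along ι, the image of G in the symmetric group on K is exactly the group of affine maps {v ↦ av + b : a ∈ S, b ∈ K}. -/

import Mathlib

/-- An "affine model" of an action of a group `G` on a set `V`: a finite field `K`,
a bijection `ι : V ≃ K`, and a subgroup `S ≤ Kˣ` such that, after transporting the
action of `G` along `ι`, the image of `G` in the symmetric group on `K` is exactly the
group of affine maps `v ↦ a v + b` with `a ∈ S`, `b ∈ K`. -/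
structure AffineModel (G : Type) [Group G] (V : Type) [MulAction G V] where
  K : Type
  [fieldK : Field K]
  [finiteK : Finite K]
  ι : V ≃ K
  S : Subgroup Kˣ
  image_eq : {σ : Equiv.Perm K | ∃ g : G, ∀ x : K, σ x = ι (g • ι.symm x)} =
    {σ : Equiv.Perm K | ∃ a ∈ S, ∃ b : K, ∀ x : K, σ x = (a : K) * x + b}

open scoped Pointwise in
theorem aux_comm {N : Type} [Group N] [Finite N] [Nontrivial N] (φ : MulAut N)
    (hfix : ∀ n, φ n = n → n = 1)
    (hinv : ∀ M : Subgroup N, (∀ x ∈ M, φ x ∈ M) → M = ⊥ ∨ M = ⊤) :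
    ∀ a b : N, a * b = b * a := by
  have hsurj : Function.Surjective (fun m : N => (φ m)⁻¹ * m) := by
    apply Finite.surjective_of_injective
    intro a b hab
    have h1 : φ (a * b⁻¹) = a * b⁻¹ := by
      simp only at hab
      rw [map_mul, map_inv]
      have : a = φ a * ((φ b)⁻¹ * b) := by rw [← hab]; group
      calc φ a * (φ b)⁻¹ = (φ a * ((φ b)⁻¹ * b)) * b⁻¹ := by group
        _ = a * b⁻¹ := by rw [← this]
    have := hfix _ h1
    exact mul_inv_eq_one.mp this
  set p := (Nat.card N).minFac with hp
  have hcard : Nat.card N ≠ 1 := by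
    have := Finite.one_lt_card (α := N); omega
  have : Fact p.Prime := ⟨Nat.minFac_prime hcard⟩
  obtain ⟨P⟩ : Nonempty (Sylow p N) := inferInstance
  obtain ⟨n, hn⟩ := MulAction.exists_smul_eq N P (φ • P)
  obtain ⟨m, hm⟩ := hsurj n
  have hQ : φ • (m • P) = m • P := by
    have h1 : φ • (m • P) = (φ m) • (φ • P) := by
      change φ • (MulAut.conj m • P) = MulAut.conj (φ m) • (φ • P)
      rw [smul_smul, smul_smul]
      congr 1
      ext x
      simp
    rw [h1, ← hn, smul_smul, ← hm]
    simp
  set Q := m • P with hQdef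
  have hQtop : (Q : Subgroup N) = ⊤ := by
    refine (hinv Q ?_).resolve_left ?_
    · intro x hx
      have h2 : φ • x ∈ φ • (Q : Subgroup N) := Subgroup.smul_mem_pointwise_smul _ _ _ hx
      have h3 : φ • (Q : Subgroup N) = (Q : Subgroup N) := by
        have := congrArg (fun S : Sylow p N => (S : Subgroup N)) hQ
        exact this
      rw [h3] at h2
      exact h2
    · exact Sylow.ne_bot_of_dvd_card Q (Nat.minFac_dvd _)
  have hPg : IsPGroup p N := by
    have := Q.isPGroup'
    rw [hQtop] at this
    exact this.of_equiv Subgroup.topEquiv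
  have hc := hPg.center_nontrivial
  have hct : Subgroup.center N = ⊤ := by
    refine (hinv _ ?_).resolve_left ?_
    · intro x hx
      rw [Subgroup.mem_center_iff] at hx ⊢
      intro g
      have := congrArg φ (hx (φ⁻¹ g))
      simpa using this
    · exact (Subgroup.nontrivial_iff_ne_bot _).mp hc
  intro a b
  have : b ∈ Subgroup.center N := by rw [hct]; trivial
  exact Subgroup.mem_center_iff.mp this a

open Polynomial in
theorem aux_field {A : Type} [AddCommGroup A] [Finite A] [Nontrivial A] (φ : A ≃+ A)
    (hinv : ∀ M : AddSubgroup A, (∀ x ∈ M, φ x ∈ M) → M = ⊥ ∨ M = ⊤) :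
    ∃ (K : Type) (_ : Field K) (_ : Finite K) (e : A ≃+ K) (u : Kˣ),
      ∀ a, e (φ a) = (u : K) * e a := by
  let f : Module.End ℤ A := φ.toAddMonoidHom.toIntLinearMap
  let M := Module.AEval' f
  let o : A ≃ₗ[ℤ] M := Module.AEval'.of f
  have hX : ∀ a, (X : ℤ[X]) • o a = o (φ a) := fun a => Module.AEval'.X_smul_of f a
  have : Nontrivial M := o.symm.toEquiv.nontrivial
  have : IsSimpleModule ℤ[X] M := by
    refine { eq_bot_or_eq_top := fun W => ?_ }
    let B : AddSubgroup A := W.toAddSubgroup.comap (o : A →+ M)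
    have hB : ∀ x, x ∈ B ↔ o x ∈ W := fun x => Iff.rfl
    rcases hinv B (fun x hx => by
      rw [hB] at hx ⊢
      rw [← hX]; exact W.smul_mem _ hx) with h | h
    · left
      rw [eq_bot_iff]
      intro y hy
      obtain ⟨x, rfl⟩ := o.surjective y
      have : x ∈ B := hy
      rw [h, AddSubgroup.mem_bot] at this
      simp [this]
    · right
      rw [eq_top_iff]
      intro y _
      obtain ⟨x, rfl⟩ := o.surjective y
      have : x ∈ B := by rw [h]; trivial
      exact this
  obtain ⟨I, hI, ⟨l⟩⟩ := isSimpleModule_iff_quot_maximal.mp (inferInstance : IsSimpleModule ℤ[X] M)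
  let e : A ≃+ (ℤ[X] ⧸ I) := o.toAddEquiv.trans l.toAddEquiv
  let _ : Field (ℤ[X] ⧸ I) := Ideal.Quotient.field I
  have he : ∀ a, e (φ a) = (Ideal.Quotient.mk I X) * e a := by
    intro a
    change l (o (φ a)) = _ * l (o a)
    rw [← hX, map_smul]
    rfl
  have hne : (Ideal.Quotient.mk I X) ≠ 0 := by
    intro h0
    obtain ⟨a, ha⟩ := exists_ne (0 : A)
    have := he a
    rw [h0, zero_mul] at this
    exact ha (by simpa using this)
  exact ⟨ℤ[X] ⧸ I, inferInstance, Finite.of_equiv A e.toEquiv, e, Units.mk0 _ hne, he⟩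

theorem aux_frob
    (G : Type) [Group G] (V : Type) [MulAction G V]
    (hfaith : ∀ g : G, (∀ v : V, g • v = v) → g = 1)
    (htrans : MulAction.IsPretransitive G V)
    (hmax : ∀ v : V, IsCoatom (MulAction.stabilizer G v))
    (hcyc : ∀ v : V, IsCyclic (MulAction.stabilizer G v))
    (hnt : ∀ v : V, MulAction.stabilizer G v ≠ ⊥) (v w : V) (hvw : v ≠ w) (h : G)
    (hv : h • v = v) (hw : h • w = w) : h = 1 := by
  have hc : ∀ z : V, h • z = z →
      MulAction.stabilizer G z ≤ Subgroup.centralizer ({h} : Set G) := by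
    intro z hz x hx
    have := hcyc z
    rw [Subgroup.mem_centralizer_singleton_iff]
    obtain ⟨g, hg⟩ := this
    obtain ⟨i, hi⟩ := Subgroup.mem_zpowers_iff.mp (hg ⟨x, hx⟩)
    obtain ⟨j, hj⟩ := Subgroup.mem_zpowers_iff.mp (hg ⟨h, hz⟩)
    have e1 : (⟨x, hx⟩ : MulAction.stabilizer G z) * ⟨h, hz⟩ = ⟨h, hz⟩ * ⟨x, hx⟩ := by
      rw [← hi, ← hj, ← zpow_add, ← zpow_add, add_comm]
    exact congrArg Subtype.val e1
  by_cases hst : MulAction.stabilizer G v = MulAction.stabilizer G w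
  · exfalso
    obtain ⟨g, rfl⟩ := MulAction.exists_smul_eq G v w
    have hle : MulAction.stabilizer G v < Subgroup.normalizer (MulAction.stabilizer G v) := by
      refine lt_of_le_of_ne Subgroup.le_normalizer ?_
      intro heq
      have : g ∈ Subgroup.normalizer (MulAction.stabilizer G v : Set G) := by
        rw [Subgroup.mem_normalizer_iff]
        intro x
        conv_rhs => rw [hst]
        simp [MulAction.mem_stabilizer_iff, mul_smul]
      rw [← heq] at this
      exact hvw this.symm
    have htop := (hmax v).2 _ hle
    have hn : (MulAction.stabilizer G v).Normal := Subgroup.normalizer_eq_top_iff.mp htop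
    apply hnt v
    rw [eq_bot_iff]
    intro x hx
    rw [Subgroup.mem_bot]
    apply hfaith
    intro z
    obtain ⟨k, rfl⟩ := MulAction.exists_smul_eq G v z
    have := hn.conj_mem x hx k⁻¹
    rw [MulAction.mem_stabilizer_iff] at this
    simp only [inv_inv, mul_smul] at this
    exact inv_smul_eq_iff.mp this
  · have htop : Subgroup.centralizer ({h} : Set G) = ⊤ := by
      rw [eq_top_iff]
      have hsup := (hmax v).sup_eq_top_of_ne (hmax w) hst
      rw [← hsup]
      exact sup_le (hc v hv) (hc w hw)
    apply hfaith
    intro z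
    obtain ⟨k, rfl⟩ := MulAction.exists_smul_eq G v z
    have hk : k ∈ Subgroup.centralizer ({h} : Set G) := by rw [htop]; trivial
    rw [Subgroup.mem_centralizer_singleton_iff] at hk
    rw [smul_smul, ← hk, mul_smul, hv]

theorem aux_transfer {G : Type} [Group G] [Finite G] (H : Subgroup G) [IsCyclic H]
    (hfrob : ∀ h ∈ H, ∀ g : G, g ∉ H → g⁻¹ * h * g ∈ H → h = 1) :
    ∃ T : G →* H, ∀ h : H, T h = h := by
  classical
  let _ : CommGroup H := IsCyclic.commGroup
  have hcomm : ∀ a b : H, (a : G) * b = b * a := fun a b =>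
    congrArg Subtype.val (mul_comm a b)
  refine ⟨MonoidHom.transfer (MonoidHom.id H), fun h => ?_⟩
  have := Fintype.ofFinite (Quotient (MulAction.orbitRel (Subgroup.zpowers (h : G)) (G ⧸ H)))
  rw [MonoidHom.transfer_eq_prod_quotient_orbitRel_zpowers_quot]
  have hfix : (h : G) • ((1 : G) : G ⧸ H) = ((1 : G) : G ⧸ H) := by
    change (((h : G) * 1 : G) : G ⧸ H) = _
    rw [QuotientGroup.eq]; simp
  have hq0 : (Quotient.mk (MulAction.orbitRel (Subgroup.zpowers (h : G)) (G ⧸ H))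
      ((1 : G) : G ⧸ H)).out = ((1 : G) : G ⧸ H) := by
    have h1 := Quotient.mk_out (s := MulAction.orbitRel (Subgroup.zpowers (h : G)) (G ⧸ H))
      ((1 : G) : G ⧸ H)
    obtain ⟨⟨x, hx⟩, hx2⟩ := MulAction.orbitRel_apply.mp h1
    rw [← hx2]
    have : x ∈ MulAction.stabilizer G ((1 : G) : G ⧸ H) :=
      (Subgroup.zpowers_le.mpr (show (h : G) ∈ MulAction.stabilizer G _ from hfix)) hx
    exact this
  rw [Finset.prod_eq_single (Quotient.mk _ ((1 : G) : G ⧸ H))]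
  · apply Subtype.ext
    simp only [MonoidHom.id_apply]
    rw [hq0]
    have hp : Function.minimalPeriod ((h : G) • ·) ((1 : G) : G ⧸ H) = 1 :=
      Function.minimalPeriod_eq_one_iff_isFixedPt.mpr hfix
    rw [hp, pow_one]
    have ha : ((1 : G) : G ⧸ H).out ∈ H := by
      have := QuotientGroup.out_eq' ((1 : G) : G ⧸ H)
      rw [eq_comm, QuotientGroup.eq] at this
      simpa using this
    rw [mul_assoc, hcomm h ⟨_, ha⟩]
    simp
  · intro q _ hq
    apply Subtype.ext
    simp only [MonoidHom.id_apply]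
    have hm := QuotientGroup.out_conj_pow_minimalPeriod_mem H (h : G) q.out
    have hn : q.out.out ∉ H := by
      intro hmem
      apply hq
      rw [← Quotient.out_eq q]
      congr 1
      rw [← QuotientGroup.out_eq' q.out, eq_comm, QuotientGroup.eq]
      simpa using hmem
    have := hfrob _ (H.pow_mem h.2 _) _ hn hm
    rw [this]; simp
  · simp

theorem affineModel_of_primitive_cyclic_stabilizers
    (G : Type) [Group G] [Finite G] (V : Type) [Finite V] [Nonempty V] [MulAction G V]
    (hfaith : ∀ g : G, (∀ v : V, g • v = v) → g = 1)
    (htrans : MulAction.IsPretransitive G V)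
    (hmax : ∀ v : V, IsCoatom (MulAction.stabilizer G v))
    (hcyc : ∀ v : V, IsCyclic (MulAction.stabilizer G v))
    (hnt : ∀ v : V, MulAction.stabilizer G v ≠ ⊥) :
    Nonempty (AffineModel G V) := by
  have frob := aux_frob G V hfaith htrans hmax hcyc hnt
  obtain ⟨v0⟩ := ‹Nonempty V›
  have hcy := hcyc v0
  have hH : ∀ g : G, g ∈ MulAction.stabilizer G v0 ↔ g • v0 = v0 := fun g => Iff.rfl
  have hmx := hmax v0
  have hn0 := hnt v0
  generalize MulAction.stabilizer G v0 = H at hcy hH hmx hn0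
  have hfr : ∀ h ∈ H, ∀ g : G, g ∉ H → g⁻¹ * h * g ∈ H → h = 1 := by
    intro h hh g hg hc
    rw [hH] at hh hg hc
    refine frob v0 (g • v0) (fun e => hg e.symm) h hh ?_
    rw [mul_smul, mul_smul, inv_smul_eq_iff] at hc
    exact hc
  obtain ⟨T, hT⟩ := aux_transfer H hfr
  set N := T.ker with hN
  have hNH : ∀ x ∈ N, x ∈ H → x = 1 := by
    intro x hx hxH
    have h1 := hT ⟨x, hxH⟩
    have h2 : T x = 1 := hx
    simp only [h2] at h1
    exact (congrArg Subtype.val h1).symm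
  have hdec : ∀ g : G, g * ((T g : H) : G)⁻¹ ∈ N := by
    intro g
    change T _ = 1
    rw [map_mul, map_inv, hT]; simp
  obtain ⟨c, hcgen⟩ := hcy
  have hpow : ∀ x ∈ H, ∃ k : ℕ, (c : G) ^ k = x := by
    intro x hx
    obtain ⟨k, hk⟩ := (mem_powers_iff_mem_zpowers.mpr (hcgen ⟨x, hx⟩))
    exact ⟨k, congrArg Subtype.val hk⟩
  have hc1 : (c : G) ≠ 1 := by
    intro h1
    apply hn0
    rw [eq_bot_iff]
    intro x hx
    obtain ⟨k, rfl⟩ := hpow x hx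
    simp [h1]
  let φ : MulAut N := MulAut.conjNormal (c : G)
  have hφ : ∀ n : N, ((φ n : N) : G) = c * n * (c : G)⁻¹ := fun n => MulAut.conjNormal_apply _ _
  have hNnt : Nontrivial N := by
    rw [Subgroup.nontrivial_iff_ne_bot]
    intro hb
    apply hmx.1
    rw [eq_top_iff]
    intro g _
    have := hdec g
    rw [hb, Subgroup.mem_bot, mul_inv_eq_one] at this
    rw [this]; exact (T g).2
  have hfix : ∀ n, φ n = n → n = 1 := by
    intro n hn
    have h1 : (c : G) * n * (c : G)⁻¹ = n := by rw [← hφ, hn]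
    have h2 : (n : G)⁻¹ * c * n = c := by
      have : (c : G) * n = n * c := by rwa [mul_inv_eq_iff_eq_mul] at h1
      rw [mul_assoc, this]; simp
    by_contra hne
    apply hc1
    refine hfr c c.2 n ?_ (by rw [h2]; exact c.2)
    intro hnH
    exact hne (Subtype.ext (hNH n n.2 hnH))
  have hinv : ∀ M : Subgroup N, (∀ x ∈ M, φ x ∈ M) → M = ⊥ ∨ M = ⊤ := by
    intro M hM
    have hMH : ∀ x ∈ H, ∀ m ∈ M.map N.subtype, x * m * x⁻¹ ∈ M.map N.subtype := by
      intro x hx m hm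
      obtain ⟨k, rfl⟩ := hpow x hx
      induction k with
      | zero => simpa using hm
      | succ k ih =>
        obtain ⟨y, hy, hy2⟩ := ih (H.pow_mem c.2 k)
        refine ⟨φ y, hM y hy, ?_⟩
        change ((φ y : N) : G) = _
        rw [hφ]
        change (y : G) = _ at hy2
        rw [hy2, pow_succ']
        group
    let L : Subgroup G :=
      { carrier := setOf fun g => g * ((T g : H) : G)⁻¹ ∈ M.map N.subtype
        one_mem' := by
          change (1 : G) * ((T 1 : H) : G)⁻¹ ∈ M.map N.subtype
          simp
        mul_mem' := by
          intro a b ha hb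
          change a * b * ((T (a * b) : H) : G)⁻¹ ∈ M.map N.subtype
          have := Subgroup.mul_mem _ ha (hMH _ (T a).2 _ hb)
          convert this using 1
          rw [map_mul, Subgroup.coe_mul]
          group
        inv_mem' := by
          intro a ha
          change a⁻¹ * ((T a⁻¹ : H) : G)⁻¹ ∈ M.map N.subtype
          have := hMH _ (H.inv_mem (T a).2) _ (Subgroup.inv_mem _ ha)
          convert this using 1
          rw [map_inv, Subgroup.coe_inv]
          group }
    have hL : ∀ g, g ∈ L ↔ g * ((T g : H) : G)⁻¹ ∈ M.map N.subtype := fun g => Iff.rfl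
    have hNL : ∀ n : N, (n : G) ∈ L ↔ n ∈ M := by
      intro n
      have h1 : T n = 1 := n.2
      rw [hL, h1]
      simp
    have hHL : H ≤ L := by
      intro x hx
      rw [hL, hT ⟨x, hx⟩]
      simp
    rcases hmx.le_iff.mp hHL with h | h
    · right
      rw [eq_top_iff]
      intro n _
      rw [← hNL, h]; trivial
    · left
      rw [eq_bot_iff]
      intro n hn
      rw [← hNL, h] at hn
      rw [Subgroup.mem_bot]
      exact Subtype.ext (hNH n n.2 hn)
  have hNcomm := aux_comm φ hfix hinv
  let _ : CommGroup N := { (inferInstance : Group N) with mul_comm := hNcomm }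
  obtain ⟨K, fK, finK, e, u, he⟩ := aux_field (A := Additive N) (MulEquiv.toAdditive φ) (by
    intro M hM
    rcases hinv (AddSubgroup.toSubgroup' M) (fun x hx => hM (Additive.ofMul x) hx) with h | h
    · left
      exact (AddSubgroup.toSubgroup' (G := N)).injective (h.trans (map_bot _).symm)
    · right
      exact (AddSubgroup.toSubgroup' (G := N)).injective (h.trans (map_top _).symm))
  have hbij : Function.Bijective (fun n : N => (n : G) • v0) := by
    constructor
    · intro a b hab
      have h1 : ((a⁻¹ * b : N) : G) ∈ H := by
        rw [hH, Subgroup.coe_mul, mul_smul, Subgroup.coe_inv, inv_smul_eq_iff]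
        exact hab.symm
      have := hNH _ (a⁻¹ * b).2 h1
      exact inv_mul_eq_one.mp (Subtype.ext this)
    · intro v
      obtain ⟨g, rfl⟩ := MulAction.exists_smul_eq G v0 v
      refine ⟨⟨_, hdec g⟩, ?_⟩
      have := (hH _).mp (H.inv_mem (T g).2)
      simp only [mul_smul, this]
  let j : N ≃ V := Equiv.ofBijective _ hbij
  have hj : ∀ n, j n = (n : G) • v0 := fun n => rfl
  let ι : V ≃ K := j.symm.trans (Additive.ofMul.trans e.toEquiv)
  have hι : ∀ n : N, ι ((n : G) • v0) = e (Additive.ofMul n) := by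
    intro n
    rw [← hj]
    simp [ι]
  have hpowe : ∀ (k : ℕ) (m : N), e (Additive.ofMul ((φ ^ k) m)) =
      ((u ^ k : Kˣ) : K) * e (Additive.ofMul m) := by
    intro k m
    induction k with
    | zero => simp
    | succ k ih =>
      have := he (Additive.ofMul ((φ ^ k) m))
      rw [pow_succ', pow_succ', Units.val_mul, mul_assoc, ← ih, ← this]
      rfl
  have hφk : ∀ (k : ℕ) (m : N), (((φ ^ k) m : N) : G) = (c : G) ^ k * m * ((c : G) ^ k)⁻¹ := by
    intro k m
    have : φ ^ k = MulAut.conjNormal ((c : G) ^ k) := (map_pow _ _ _).symm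
    rw [this, MulAut.conjNormal_apply]
  have key : ∀ (n : N) (k : ℕ) (x : K), ι (((n : G) * (c : G) ^ k) • ι.symm x) =
      ((u ^ k : Kˣ) : K) * x + e (Additive.ofMul n) := by
    intro n k x
    obtain ⟨m, rfl⟩ : ∃ m : N, e (Additive.ofMul m) = x :=
      ⟨(e.symm x).toMul, by simp⟩
    rw [← hι, Equiv.symm_apply_apply, hι, ← hpowe, add_comm, ← map_add, ← ofMul_mul, ← hι]
    congr 1
    rw [Subgroup.coe_mul, hφk]
    have hck := (hH _).mp (H.inv_mem (H.pow_mem c.2 k))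
    simp only [mul_smul]
    rw [hck]
  refine ⟨{ K := K, fieldK := fK, finiteK := finK, ι := ι, S := Subgroup.zpowers u, image_eq := ?_ }⟩
  ext σ
  constructor
  · rintro ⟨g, hg⟩
    obtain ⟨k, hk⟩ := hpow _ (T g).2
    refine ⟨u ^ k, Subgroup.npow_mem_zpowers u k, e (Additive.ofMul ⟨_, hdec g⟩), fun x => ?_⟩
    rw [hg, ← key, hk]
    simp
  · rintro ⟨a, ha, b, hab⟩
    obtain ⟨k, rfl⟩ := mem_powers_iff_mem_zpowers.mpr ha
    refine ⟨((e.symm b).toMul : N) * (c : G) ^ k, fun x => ?_⟩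
    rw [key, hab]
    simp
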